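/- For every (t₁, t₂, t₃, t₁₂, t₂₃, t₁₃) ∈ ℂ⁶, there exist matrices ξ₁, ξ₂, ξ₃ in SL(2,ℂ) with tr(ξᵢ) = tᵢ for i = 1,2,3 and tr(ξ₁ξ₂) = t₁₂, tr(ξ₂ξ₃) = t₂₃, tr(ξ₁ξ₃) = t₁₃. -/

import Mathlib

open Matrix

abbrev SL2C := Matrix.SpecialLinearGroup (Fin 2) ℂ

noncomputable def trC (g : SL2C) : ℂ := Matrix.trace (g : Matrix (Fin 2) (Fin 2) ℂ)

/-!
Suppose that `A`, `B` in `SL(2, K)` have invertible commutator `⁅A, B⁆ = A * B - B * A`. As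
`⁅A, B⁆` is orthogonal to `1`, `A` and `B` for the trace form, adding a multiple of it to `X`
changes none of `tr X`, `tr (A X)`, `tr (B X)`. These three numbers can be prescribed arbitrarily,
and the multiple can be chosen to make `det X = 1`.

By Fricke's identity `det ⁅A, B⁆` depends only on `tr A`, `tr B`, `tr (A B)`, so this settles the
theorem unless both pairs `(1, 2)` and `(1, 3)` have degenerate traces. In that case the traces of
each pair are those of two diagonal matrices; an upper triangular `ξ₂` and a lower triangular `ξ₃`
then leave `tr (ξ₂ ξ₃)` free.
-/

section TraceForm

variable {n R K : Type*} [Fintype n] [CommRing R] [Field K]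

theorem trace_lie (A B : Matrix n n R) : ⁅A, B⁆.trace = 0 := by
  rw [Ring.lie_def, trace_sub, trace_mul_comm, sub_self]

theorem trace_mul_lie (A B C : Matrix n n R) : (A * ⁅B, C⁆).trace = (⁅A, B⁆ * C).trace := by
  rw [Ring.lie_def, Ring.lie_def, mul_sub, sub_mul, trace_sub, trace_sub, ← Matrix.mul_assoc,
    ← Matrix.mul_assoc, trace_mul_cycle A C B]

theorem trace_mul_lie_self_left (A B : Matrix n n R) : (A * ⁅A, B⁆).trace = 0 := by
  rw [Ring.lie_def, mul_sub, trace_sub, ← Matrix.mul_assoc A B A, trace_mul_comm (A * B), sub_self]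

theorem trace_mul_lie_self_right (A B : Matrix n n R) : (B * ⁅A, B⁆).trace = 0 := by
  rw [Ring.lie_def, mul_sub, trace_sub, ← Matrix.mul_assoc B A B, trace_mul_comm (B * A), sub_self]

theorem exists_trace_mul_eq {M : Matrix n n K} (hM : M ≠ 0) (c : K) :
    ∃ Y : Matrix n n K, (M * Y).trace = c := by
  classical
  obtain ⟨i, j, hij⟩ : ∃ i j, M i j ≠ 0 := by
    simpa only [ne_eq, ← Matrix.ext_iff, Matrix.zero_apply, not_forall] using hM
  exact ⟨single j i ((M i j)⁻¹ * c), by simp [trace_mul_single, hij]⟩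

theorem exists_traces_eq_of_not_commute {A B : Matrix n n K} (h : ¬Commute A B) (r s t : K) :
    ∃ X : Matrix n n K, X.trace = r ∧ (A * X).trace = s ∧ (B * X).trace = t := by
  have : Nonempty n := by
    by_contra hn
    rw [not_nonempty_iff] at hn
    exact h (Subsingleton.elim _ _)
  have hAB : ⁅A, B⁆ ≠ 0 := sub_ne_zero.mpr h
  have hBA : ⁅B, A⁆ ≠ 0 := sub_ne_zero.mpr fun hcomm ↦ h hcomm.symm
  obtain ⟨T, rfl⟩ := trace_surjective (n := n) r
  -- `⁅B, Y⁆` is orthogonal to `1` and `B`, and `⁅A, Z⁆` is orthogonal to `1` and `A`.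
  obtain ⟨Y, hY⟩ := exists_trace_mul_eq hAB (s - (A * T).trace)
  obtain ⟨Z, hZ⟩ := exists_trace_mul_eq hBA (t - (B * T).trace)
  refine ⟨T + ⁅B, Y⁆ + ⁅A, Z⁆, ?_, ?_, ?_⟩
  · simp only [trace_add, trace_lie, add_zero]
  · rw [mul_add, mul_add, trace_add, trace_add, trace_mul_lie A B Y, trace_mul_lie_self_left, hY]
    ring
  · rw [mul_add, mul_add, trace_add, trace_add, trace_mul_lie B A Z, trace_mul_lie_self_left, hZ]
    ring

end TraceForm

section Determinant

open Polynomial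

variable {n K : Type*} [Fintype n] [DecidableEq n] [Field K] [IsAlgClosed K]

theorem exists_det_add_smul_eq [Nonempty n] {N : Matrix n n K} (hN : N.det ≠ 0)
    (M : Matrix n n K) (d : K) : ∃ x : K, (M + x • N).det = d := by
  let p : K[X] := det ((X : K[X]) • N.map C + M.map C) - C d
  have hcoeff : p.coeff (Fintype.card n) = N.det := by
    simp only [p, coeff_sub, coeff_det_X_add_C_card, coeff_C_of_ne_zero Fintype.card_ne_zero,
      sub_zero]
  have hdeg : p.degree ≠ 0 := by
    intro hp
    rw [eq_C_of_degree_eq_zero hp, coeff_C_of_ne_zero Fintype.card_ne_zero] at hcoeff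
    exact hN hcoeff.symm
  obtain ⟨x, hx⟩ := IsAlgClosed.exists_root p hdeg
  refine ⟨x, ?_⟩
  have heval : p.eval x = (M + x • N).det - d := by
    simp only [p, eval_sub, eval_C, sub_left_inj]
    rw [← coe_evalRingHom, RingHom.map_det]
    congr 1
    ext i j
    simp [add_comm, mul_comm x]
  exact sub_eq_zero.mp (heval.symm.trans hx)

theorem exists_det_traces_eq_of_det_lie_ne_zero [Nonempty n] {A B : Matrix n n K}
    (h : ⁅A, B⁆.det ≠ 0) (d r s t : K) :
    ∃ X : Matrix n n K, X.det = d ∧ X.trace = r ∧ (A * X).trace = s ∧ (B * X).trace = t := by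
  have hAB : ¬Commute A B := fun hcomm ↦ h (by rw [hcomm.lie_eq, det_zero])
  obtain ⟨X₀, rfl, rfl, rfl⟩ := exists_traces_eq_of_not_commute hAB r s t
  obtain ⟨x, hx⟩ := exists_det_add_smul_eq h X₀ d
  refine ⟨X₀ + x • ⁅A, B⁆, hx, ?_, ?_, ?_⟩
  · simp only [trace_add, trace_smul, trace_lie, smul_zero, add_zero]
  · simp only [mul_add, Matrix.mul_smul, trace_add, trace_smul, trace_mul_lie_self_left, smul_zero,
      add_zero]
  · simp only [mul_add, Matrix.mul_smul, trace_add, trace_smul, trace_mul_lie_self_right, smul_zero,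
      add_zero]

end Determinant

section Fricke

/-- The Fricke polynomial, normalised so that its value at `(tr A, tr B, tr (A B))` is
`tr (A B A⁻¹ B⁻¹) - 2` for `A`, `B` of determinant `1`. Over an algebraically closed field
it vanishes exactly when `A` and `B` have a common eigenvector. -/
def fricke {R : Type*} [CommRing R] (x y z : R) : R := x ^ 2 + y ^ 2 + z ^ 2 - x * y * z - 4

theorem det_lie_eq_neg_fricke {R : Type*} [CommRing R] {A B : Matrix (Fin 2) (Fin 2) R}
    (hA : A.det = 1) (hB : B.det = 1) :
    ⁅A, B⁆.det = -fricke A.trace B.trace (A * B).trace := by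
  rw [det_fin_two] at hA hB
  simp only [Ring.lie_def, fricke, det_fin_two, trace_fin_two, Matrix.sub_apply, Matrix.mul_apply,
    Fin.sum_univ_two]
  linear_combination (4 * (B 0 0 * B 1 1 - B 0 1 * B 1 0) - (B 0 0 + B 1 1) ^ 2) * hA +
    (4 - (A 0 0 + A 1 1) ^ 2) * hB

theorem fricke_add_add {R : Type*} [CommRing R] {a a' b b' : R} (ha : a * a' = 1) (hb : b * b' = 1)
    (z : R) :
    fricke (a + a') (b + b') z = (z - (a * b + a' * b')) * (z - (a * b' + a' * b)) := by
  unfold fricke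
  linear_combination (2 - b ^ 2 - b' ^ 2) * ha + (2 - a ^ 2 - a' ^ 2) * hb

open Polynomial

variable {K : Type*} [Field K] [IsAlgClosed K]

theorem exists_add_eq_and_mul_eq (s p : K) : ∃ x y : K, x + y = s ∧ x * y = p := by
  have hdeg : (X ^ 2 - C s * X + C p).degree = 2 := by compute_degree!
  obtain ⟨x, hx⟩ := IsAlgClosed.exists_root _ (hdeg.trans_ne two_ne_zero)
  have hroot : x ^ 2 - s * x + p = 0 := by simpa using hx
  exact ⟨x, s - x, by ring, by linear_combination -hroot⟩

theorem exists_eigenvalues_of_fricke_eq_zero {a a' y z : K} (ha : a * a' = 1)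
    (h : fricke (a + a') y z = 0) :
    ∃ b b' : K, b * b' = 1 ∧ b + b' = y ∧ a * b + a' * b' = z := by
  obtain ⟨b, b', rfl, hb⟩ := exists_add_eq_and_mul_eq y 1
  rw [fricke_add_add ha hb, mul_eq_zero, sub_eq_zero, sub_eq_zero] at h
  rcases h with rfl | rfl
  · exact ⟨b, b', hb, rfl, rfl⟩
  · exact ⟨b', b, by rw [mul_comm, hb], add_comm _ _, rfl⟩

end Fricke

section SpecialLinear

open scoped MatrixGroups

variable {K : Type*} [Field K] [IsAlgClosed K]

theorem exists_pair_traces_eq (x y z : K) :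
    ∃ A B : SL(2, K), A.1.trace = x ∧ B.1.trace = y ∧ (A.1 * B.1).trace = z := by
  obtain ⟨w, w', rfl, hw⟩ := exists_add_eq_and_mul_eq z 1
  refine ⟨⟨!![x, -1; 1, 0], by simp⟩, ⟨!![0, w; -w', y], by simp [hw]⟩, ?_, ?_, ?_⟩ <;>
    simp [trace_fin_two, add_comm]

theorem exists_third_traces_eq {A B : SL(2, K)}
    (h : fricke A.1.trace B.1.trace (A.1 * B.1).trace ≠ 0) (r s t : K) :
    ∃ X : SL(2, K), X.1.trace = r ∧ (A.1 * X.1).trace = s ∧ (B.1 * X.1).trace = t := by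
  have hdet : ⁅A.1, B.1⁆.det ≠ 0 := by
    rw [det_lie_eq_neg_fricke A.2 B.2]
    exact neg_ne_zero.mpr h
  obtain ⟨X, hX, hr, hs, ht⟩ := exists_det_traces_eq_of_det_lie_ne_zero hdet 1 r s t
  exact ⟨⟨X, hX⟩, hr, hs, ht⟩

theorem exists_triple_traces_eq_of_fricke_eq_zero {t₁ t₂ t₃ t₁₂ t₁₃ : K}
    (h₁₂ : fricke t₁ t₂ t₁₂ = 0) (h₁₃ : fricke t₁ t₃ t₁₃ = 0) (t₂₃ : K) :
    ∃ ξ₁ ξ₂ ξ₃ : SL(2, K),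
      ξ₁.1.trace = t₁ ∧ ξ₂.1.trace = t₂ ∧ ξ₃.1.trace = t₃ ∧
      (ξ₁.1 * ξ₂.1).trace = t₁₂ ∧ (ξ₂.1 * ξ₃.1).trace = t₂₃ ∧ (ξ₁.1 * ξ₃.1).trace = t₁₃ := by
  obtain ⟨a, a', rfl, ha⟩ := exists_add_eq_and_mul_eq t₁ 1
  obtain ⟨b, b', hb, rfl, rfl⟩ := exists_eigenvalues_of_fricke_eq_zero ha h₁₂
  obtain ⟨c, c', hc, rfl, rfl⟩ := exists_eigenvalues_of_fricke_eq_zero ha h₁₃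
  obtain ⟨u, hu⟩ : ∃ u, b * c + u + b' * c' = t₂₃ := ⟨t₂₃ - b * c - b' * c', by ring⟩
  refine ⟨⟨!![a, 0; 0, a'], by simp [ha]⟩, ⟨!![b, 1; 0, b'], by simp [hb]⟩,
    ⟨!![c, 0; u, c'], by simp [hc]⟩, ?_, ?_, ?_, ?_, ?_, ?_⟩ <;>
    simp [trace_fin_two, hu]

theorem six_trace_map_surjective_general (t₁ t₂ t₃ t₁₂ t₂₃ t₁₃ : K) :
    ∃ ξ₁ ξ₂ ξ₃ : SL(2, K),
      ξ₁.1.trace = t₁ ∧ ξ₂.1.trace = t₂ ∧ ξ₃.1.trace = t₃ ∧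
      (ξ₁ * ξ₂).1.trace = t₁₂ ∧ (ξ₂ * ξ₃).1.trace = t₂₃ ∧ (ξ₁ * ξ₃).1.trace = t₁₃ := by
  by_cases hpair₁₂ : fricke t₁ t₂ t₁₂ = 0
  · by_cases hpair₁₃ : fricke t₁ t₃ t₁₃ = 0
    · exact exists_triple_traces_eq_of_fricke_eq_zero hpair₁₂ hpair₁₃ t₂₃
    · obtain ⟨ξ₁, ξ₃, rfl, rfl, rfl⟩ := exists_pair_traces_eq t₁ t₃ t₁₃
      obtain ⟨ξ₂, h₂, h₁₂, h₃₂⟩ := exists_third_traces_eq hpair₁₃ t₂ t₁₂ t₂₃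
      have h₂₃ : (ξ₂ * ξ₃).1.trace = t₂₃ := (trace_mul_comm ξ₂.1 ξ₃.1).trans h₃₂
      exact ⟨ξ₁, ξ₂, ξ₃, rfl, h₂, rfl, h₁₂, h₂₃, rfl⟩
  · obtain ⟨ξ₁, ξ₂, rfl, rfl, rfl⟩ := exists_pair_traces_eq t₁ t₂ t₁₂
    obtain ⟨ξ₃, h₃, h₁₃, h₂₃⟩ := exists_third_traces_eq hpair₁₂ t₃ t₁₃ t₂₃
    exact ⟨ξ₁, ξ₂, ξ₃, rfl, rfl, h₃, rfl, h₂₃, h₁₃⟩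

end SpecialLinear

theorem six_trace_map_surjective (t₁ t₂ t₃ t₁₂ t₂₃ t₁₃ : ℂ) :
    ∃ ξ₁ ξ₂ ξ₃ : SL2C,
      trC ξ₁ = t₁ ∧ trC ξ₂ = t₂ ∧ trC ξ₃ = t₃ ∧
      trC (ξ₁ * ξ₂) = t₁₂ ∧ trC (ξ₂ * ξ₃) = t₂₃ ∧ trC (ξ₁ * ξ₃) = t₁₃ :=
  six_trace_map_surjective_general t₁ t₂ t₃ t₁₂ t₂₃ t₁₃
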